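/- (Expected weight-enumerator bound for a random maximal-entanglement code.) Let n ≥ 1 and 0 ≤ k ≤ n, and let 𝒱 be the set of all F₂-subspaces S ⊆ V_n with dim S = 2(n−k) and S ∩ S^⊥ = {0}. Then for every real number γ ≥ 0, (1/|𝒱|) · Σ_{S ∈ 𝒱} Σ_{e ∈ S^⊥, e ≠ 0} γ^{wt(e)} = ((2^{2k}−1)/(2^{2n}−1)) · ((1+3γ)^n − 1). In particular, for the depolarizing channel with parameter p ∈ [0,1] and Bhattacharyya parameter γ = 2√(p(1−p)/3) + 2p/3, the average over S ∈ 𝒱 of the MAP block error probability of the code S is at most ((2^{2k}−1)/(2^{2n}−1))·((1+3γ)^n − 1). -/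

import Mathlib

/-!
Products of symplectic transvections act transitively on the nonzero vectors, and every isometry of
the symplectic product permutes the subspaces being averaged over. Each nonzero `e` then lies in
`S^⊥` for the same number of `S`, so counting the incidences `e ∈ S^⊥` twice shows that the average
weight enumerator is a fixed multiple of the weight enumerator of the whole space, which factorizes
over the qubits.

If a MAP decoder fails at `E`, some `E + e` with `0 ≠ e ∈ S^⊥` is at least as likely, whence
`P(E) ≤ √(P(E) P(E + e))`. For fixed `e` the sum of the right-hand side over all `E` again
factorizes over the qubits, to `γ ^ wt e`, and the error bound reduces to the weight enumerator.
-/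

open Finset

/-- The binary symplectic space modelling `n`-qubit Pauli operators modulo phases. -/
abbrev V (n : ℕ) := (Fin n → ZMod 2) × (Fin n → ZMod 2)

/-- The Pauli weight of `v = (x, z)`: the number of indices where `(x i, z i) ≠ (0,0)`. -/
def wt {n : ℕ} (v : V n) : ℕ :=
  (Finset.univ.filter fun i => ¬(v.1 i = 0 ∧ v.2 i = 0)).card

/-- The binary symplectic product. -/
def sympl {n : ℕ} (u v : V n) : ZMod 2 :=
  ∑ i, (u.1 i * v.2 i + u.2 i * v.1 i)

lemma sympl_add_left {n : ℕ} (a b w : V n) :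
    sympl (a + b) w = sympl a w + sympl b w := by
  simp only [sympl, Prod.fst_add, Prod.snd_add, Pi.add_apply, ← Finset.sum_add_distrib]
  exact Finset.sum_congr rfl fun i _ => by ring

lemma sympl_smul_left {n : ℕ} (c : ZMod 2) (a w : V n) :
    sympl (c • a) w = c * sympl a w := by
  simp only [sympl, Prod.smul_fst, Prod.smul_snd, Pi.smul_apply, smul_eq_mul,
    Finset.mul_sum]
  exact Finset.sum_congr rfl fun i _ => by ring

/-- The symplectic dual `W^⊥` of a subspace `W ⊆ V n`. -/
def sdual {n : ℕ} (W : Submodule (ZMod 2) (V n)) : Submodule (ZMod 2) (V n) where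
  carrier := {u | ∀ w ∈ W, sympl u w = 0}
  add_mem' := fun ha hb w hw => by
    rw [sympl_add_left, ha w hw, hb w hw, add_zero]
  zero_mem' := fun w hw => by simp [sympl]
  smul_mem' := fun c a ha w hw => by rw [sympl_smul_left, ha w hw, mul_zero]

open scoped Classical

/-- The depolarizing error distribution with parameter `p` on `V n`. -/
noncomputable def depolP (n : ℕ) (p : ℝ) (v : V n) : ℝ :=
  (1 - p) ^ (n - wt v) * (p / 3) ^ (wt v)

section DoubleCounting

variable {ι α 𝕜 : Type*} [Field 𝕜] [CharZero 𝕜]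

theorem average_sum_filter_eq {s : Finset ι} {t : Finset α} {R : ι → α → Prop} {r : ℕ}
    (hs : s.Nonempty) (ht : t.Nonempty) (hrow : ∀ i ∈ s, #{x ∈ t | R i x} = r)
    (hcol : ∀ x ∈ t, ∀ y ∈ t, #{i ∈ s | R i x} = #{i ∈ s | R i y}) (f : α → 𝕜) :
    (1 / #s : 𝕜) * ∑ i ∈ s, ∑ x ∈ t with R i x, f x = r / #t * ∑ x ∈ t, f x := by
  obtain ⟨y, hy⟩ := ht
  have hcount : (#s * r : 𝕜) = #t * #{i ∈ s | R i y} := by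
    exact_mod_cast card_mul_eq_card_mul R hrow fun x hx => hcol x hx y hy
  have hswap : ∑ i ∈ s, ∑ x ∈ t with R i x, f x = #{i ∈ s | R i y} * ∑ x ∈ t, f x := by
    calc ∑ i ∈ s, ∑ x ∈ t with R i x, f x
        = ∑ x ∈ t, ∑ i ∈ s with R i x, f x :=
          sum_sum_bipartiteAbove_eq_sum_sum_bipartiteBelow R fun _ x => f x
      _ = ∑ x ∈ t, #{i ∈ s | R i y} * f x := sum_congr rfl fun x hx => by
          rw [sum_const, nsmul_eq_mul, hcol x hx y hy]
      _ = #{i ∈ s | R i y} * ∑ x ∈ t, f x := (mul_sum ..).symm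
  have hs₀ : (#s : 𝕜) ≠ 0 := Nat.cast_ne_zero.mpr hs.card_ne_zero
  have ht₀ : (#t : 𝕜) ≠ 0 := Nat.cast_ne_zero.mpr (card_ne_zero_of_mem hy)
  rw [hswap]
  field_simp
  linear_combination -(∑ x ∈ t, f x) * hcount

end DoubleCounting

section Isometry

open LinearMap.BilinForm

section CommRing

variable {K M : Type*} [CommRing K] [AddCommGroup M] [Module K M] {B : LinearMap.BilinForm K M}

/-- The symplectic transvection `x ↦ x + c B(a, x) a` as an isometry of an alternating form. These
maps move any nonzero vector to any other when the form is nondegenerate. -/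
def transvectionIsometry (hB : B.IsAlt) (c : K) (a : M) : B.IsometryEquiv B where
  toLinearEquiv := LinearEquiv.transvection (f := c • B a) (v := a) (by simp [hB.self_eq_zero])
  map_app' x y := by
    change B (x + (c * B a x) • a) (y + (c * B a y) • a) = B x y
    simp only [map_add, map_smul, LinearMap.add_apply, LinearMap.smul_apply, smul_eq_mul,
      hB.self_eq_zero, ← hB.neg_eq a x]
    ring

theorem transvectionIsometry_apply (hB : B.IsAlt) (c : K) (a x : M) :
    transvectionIsometry hB c a x = x + (c * B a x) • a :=
  rfl

theorem map_isometryEquiv_orthogonal {N : Type*} [AddCommGroup N] [Module K N]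
    {C : LinearMap.BilinForm K N} (g : B.IsometryEquiv C) (S : Submodule K M) :
    (B.orthogonal S).map (g : M ≃ₗ[K] N).toLinearMap =
      C.orthogonal (S.map (g : M ≃ₗ[K] N).toLinearMap) := by
  ext x
  obtain ⟨y, rfl⟩ := (g : M ≃ₗ[K] N).surjective x
  calc g y ∈ (B.orthogonal S).map (g : M ≃ₗ[K] N).toLinearMap
      ↔ ∀ s ∈ S, B s y = 0 := (g : M ≃ₗ[K] N).injective.mem_set_image
    _ ↔ ∀ s ∈ S, C (g s) (g y) = 0 := by simp only [g.map_app]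
    _ ↔ g y ∈ C.orthogonal (S.map (g : M ≃ₗ[K] N).toLinearMap) :=
        (Set.forall_mem_image (p := fun t => C t (g y) = 0)).symm

/-- Stability of a family of submodules under all isometries of a bilinear form. -/
def IsIsometryInvariant (B : LinearMap.BilinForm K M) (𝒱 : Finset (Submodule K M)) : Prop :=
  ∀ g : B.IsometryEquiv B, ∀ S ∈ 𝒱, S.map (g : M ≃ₗ[K] M).toLinearMap ∈ 𝒱

end CommRing

variable {K M : Type*} [Field K] [AddCommGroup M] [Module K M] {B : LinearMap.BilinForm K M}

theorem exists_isometryEquiv_apply_eq_of_apply_ne_zero (hB : B.IsAlt) {u v : M}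
    (huv : B u v ≠ 0) : ∃ g : B.IsometryEquiv B, g u = v := by
  refine ⟨transvectionIsometry hB (B v u)⁻¹ (v - u), ?_⟩
  have hvu : B v u ≠ 0 := fun h => huv (hB.isRefl _ _ h)
  simp [transvectionIsometry_apply, hB.self_eq_zero, hvu]

-- A vector space is not the union of the two hyperplanes `u^⊥` and `v^⊥`.
theorem exists_apply_ne_zero_and_apply_ne_zero (hB : B.SeparatingLeft) (hB' : B.SeparatingRight)
    {u v : M} (hu : u ≠ 0) (hv : v ≠ 0) : ∃ w, B u w ≠ 0 ∧ B w v ≠ 0 := by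
  obtain ⟨a, ha⟩ : ∃ a, B u a ≠ 0 := by
    contrapose! hu
    exact hB u hu
  obtain ⟨b, hb⟩ : ∃ b, B b v ≠ 0 := by
    contrapose! hv
    exact hB' v hv
  by_cases hav : B a v = 0
  · by_cases hub : B u b = 0
    · exact ⟨a + b, by simpa [hub] using ha, by simpa [hav] using hb⟩
    · exact ⟨b, hub, hb⟩
  · exact ⟨a, ha, hav⟩

theorem exists_isometryEquiv_apply_eq (hB : B.IsAlt) (hnd : B.Nondegenerate) {u v : M}
    (hu : u ≠ 0) (hv : v ≠ 0) : ∃ g : B.IsometryEquiv B, g u = v := by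
  obtain ⟨w, huw, hwv⟩ := exists_apply_ne_zero_and_apply_ne_zero hnd.1 hnd.2 hu hv
  obtain ⟨g, rfl⟩ := exists_isometryEquiv_apply_eq_of_apply_ne_zero hB huw
  obtain ⟨h, rfl⟩ := exists_isometryEquiv_apply_eq_of_apply_ne_zero hB hwv
  exact ⟨g.trans h, rfl⟩

theorem IsIsometryInvariant.card_filter_mem_orthogonal_le {𝒱 : Finset (Submodule K M)}
    (h𝒱 : IsIsometryInvariant B 𝒱) (g : B.IsometryEquiv B) (u : M) :
    #{S ∈ 𝒱 | u ∈ B.orthogonal S} ≤ #{S ∈ 𝒱 | g u ∈ B.orthogonal S} := by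
  refine card_le_card_of_injOn (Submodule.map (g : M ≃ₗ[K] M).toLinearMap) (fun S hS => ?_)
    (Submodule.map_injective_of_injective (g : M ≃ₗ[K] M).injective).injOn
  obtain ⟨hS, hu⟩ := mem_filter.mp hS
  refine mem_filter.mpr ⟨h𝒱 g S hS, ?_⟩
  rw [← map_isometryEquiv_orthogonal]
  exact Submodule.mem_map_of_mem hu

theorem IsIsometryInvariant.card_filter_mem_orthogonal_eq {𝒱 : Finset (Submodule K M)}
    (h𝒱 : IsIsometryInvariant B 𝒱) (hB : B.IsAlt) (hnd : B.Nondegenerate) {u v : M}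
    (hu : u ≠ 0) (hv : v ≠ 0) :
    #{S ∈ 𝒱 | u ∈ B.orthogonal S} = #{S ∈ 𝒱 | v ∈ B.orthogonal S} := by
  obtain ⟨g, rfl⟩ := exists_isometryEquiv_apply_eq hB hnd hu hv
  obtain ⟨h, hgu⟩ := exists_isometryEquiv_apply_eq hB hnd hv hu
  refine le_antisymm (h𝒱.card_filter_mem_orthogonal_le g u) ?_
  simpa only [hgu] using h𝒱.card_filter_mem_orthogonal_le h (g u)

theorem card_filter_mem_and_ne_zero [Fintype K] [Fintype M] [DecidableEq M] (W : Submodule K M) :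
    #{x | x ∈ W ∧ x ≠ 0} = Fintype.card K ^ Module.finrank K W - 1 := by
  have herase : ({x | x ∈ W ∧ x ≠ 0} : Finset M) = ({x | x ∈ W} : Finset M).erase 0 := by
    ext x
    simp [and_comm]
  rw [herase, card_erase_of_mem (by simp), ← Fintype.card_subtype,
    ← Module.card_eq_pow_finrank (K := K) (V := W)]

theorem IsIsometryInvariant.average_sum_orthogonal_eq {𝕜 : Type*} [Field 𝕜] [CharZero 𝕜]
    [Fintype K] [Fintype M] [DecidableEq M] [Nontrivial M] {𝒱 : Finset (Submodule K M)}
    (h𝒱 : IsIsometryInvariant B 𝒱) (hB : B.IsAlt) (hnd : B.Nondegenerate) (hne : 𝒱.Nonempty)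
    {r : ℕ} (hr : ∀ S ∈ 𝒱, Module.finrank K (B.orthogonal S) = r) (f : M → 𝕜) :
    (1 / #𝒱 : 𝕜) * ∑ S ∈ 𝒱, ∑ x with x ∈ B.orthogonal S ∧ x ≠ 0, f x =
      (Fintype.card K ^ r - 1) / (Fintype.card K ^ Module.finrank K M - 1) *
        ∑ x with x ≠ 0, f x := by
  have hblock (S : Submodule K M) :
      ({x | x ∈ B.orthogonal S ∧ x ≠ 0} : Finset M) =
        {x ∈ ({x | x ≠ 0} : Finset M) | x ∈ B.orthogonal S} := by
    rw [filter_filter]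
    simp only [and_comm]
  have hcast (d : ℕ) :
      ((Fintype.card K ^ d - 1 : ℕ) : 𝕜) = (Fintype.card K : 𝕜) ^ d - 1 := by
    rw [Nat.cast_sub (Nat.one_le_pow _ _ Fintype.card_pos), Nat.cast_pow, Nat.cast_one]
  have hcard : #({x | x ≠ 0} : Finset M) = Fintype.card K ^ Module.finrank K M - 1 := by
    simpa using card_filter_mem_and_ne_zero (⊤ : Submodule K M)
  simp only [hblock]
  rw [average_sum_filter_eq (R := fun S x => x ∈ B.orthogonal S) hne (r := Fintype.card K ^ r - 1),
    hcard, hcast, hcast]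
  · obtain ⟨x, hx⟩ := exists_ne (0 : M)
    exact ⟨x, by simpa using hx⟩
  · intro S hS
    rw [← hblock, card_filter_mem_and_ne_zero, hr S hS]
  · intro x hx y hy
    exact h𝒱.card_filter_mem_orthogonal_eq hB hnd (by simpa using hx) (by simpa using hy)

end Isometry

section HammingWeight

variable {ι A R : Type*} [Fintype ι] [Zero A] [DecidableEq A] [CommSemiring R]

theorem prod_ite_eq_zero_eq_pow_mul_pow_hammingNorm (x : ι → A) (a b : R) :
    ∏ i, (if x i = 0 then a else b) =
      a ^ (Fintype.card ι - hammingNorm x) * b ^ hammingNorm x := by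
  have hzeros : #{i | x i = 0} = Fintype.card ι - hammingNorm x := by
    rw [← card_univ, ← card_filter_add_card_filter_not (s := univ) fun i => x i = 0]
    exact (Nat.add_sub_cancel ..).symm
  rw [prod_ite, prod_const, prod_const, hzeros, hammingNorm]

theorem sum_ite_eq_zero [Fintype A] (a b : R) :
    ∑ x : A, (if x = 0 then a else b) = a + (Fintype.card A - 1 : ℕ) * b := by
  rw [← add_sum_erase univ _ (mem_univ 0), if_pos rfl,
    sum_congr rfl fun x hx => if_neg (ne_of_mem_erase hx), sum_const, nsmul_eq_mul,
    card_erase_of_mem (mem_univ 0), card_univ]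

theorem sum_pow_hammingNorm [DecidableEq ι] [Fintype A] (γ : R) :
    ∑ x : ι → A, γ ^ hammingNorm x = (1 + (Fintype.card A - 1 : ℕ) * γ) ^ Fintype.card ι := by
  calc ∑ x : ι → A, γ ^ hammingNorm x
      = ∑ x : ι → A, ∏ i, (if x i = 0 then 1 else γ) := by
        simp [prod_ite_eq_zero_eq_pow_mul_pow_hammingNorm]
    _ = ∏ _i : ι, ∑ y : A, (if y = 0 then 1 else γ) :=
        (Fintype.prod_sum fun _ y => if y = 0 then 1 else γ).symm
    _ = (1 + (Fintype.card A - 1 : ℕ) * γ) ^ Fintype.card ι := by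
        simp [sum_ite_eq_zero]

end HammingWeight

section Bhattacharyya

variable {G : Type*} [AddCommGroup G] [Fintype G]

/-- The Bhattacharyya overlap `∑ₓ √(P(x) P(x + e))` of a weight function with its translate
by `e`; it bounds the weight of the `x` that a likelihood comparison confuses with `x + e`. -/
noncomputable def bhattacharyya (P : G → ℝ) (e : G) : ℝ :=
  ∑ x, √(P x * P (x + e))

/-- The set of points `x` with a competitor `x + e`, `e ∈ T`, that is at least as likely as `x`.
A maximum-likelihood decision between translates by `T` can only fail on this set. -/
noncomputable def confusable (P : G → ℝ) (T : Finset G) : Finset G :=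
  {x | ∃ e ∈ T, P x ≤ P (x + e)}

theorem sum_confusable_le {P : G → ℝ} (hP : ∀ x, 0 ≤ P x) (T : Finset G) :
    ∑ x ∈ confusable P T, P x ≤ ∑ e ∈ T, bhattacharyya P e := by
  calc ∑ x ∈ confusable P T, P x
      ≤ ∑ x ∈ confusable P T, ∑ e ∈ T, √(P x * P (x + e)) := sum_le_sum fun x hx => by
        obtain ⟨e, he, hle⟩ := (mem_filter.mp hx).2
        calc P x ≤ √(P x * P (x + e)) :=
              Real.le_sqrt_of_sq_le (by rw [sq]; exact mul_le_mul_of_nonneg_left hle (hP x))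
          _ ≤ ∑ e ∈ T, √(P x * P (x + e)) :=
            single_le_sum (f := fun e => √(P x * P (x + e))) (fun _ _ => Real.sqrt_nonneg _) he
    _ ≤ ∑ x, ∑ e ∈ T, √(P x * P (x + e)) :=
        sum_le_sum_of_subset_of_nonneg (subset_univ _) fun _ _ _ =>
          sum_nonneg fun _ _ => Real.sqrt_nonneg _
    _ = ∑ e ∈ T, bhattacharyya P e := sum_comm

theorem filter_decoder_ne_subset_confusable {σ : Type*} [SetLike σ G] [AddSubgroupClass σ G]
    [DecidableEq G] {P : G → ℝ} {L : σ} {S : Set G} {ℓ s ℓhat : G → G}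
    (hsplit : ∀ x, ℓ x ∈ L ∧ s x ∈ S ∧ x = ℓ x + s x)
    (hdecode : ∀ y ∈ S, ℓhat y ∈ L ∧ ∀ z ∈ L, P (z + y) ≤ P (ℓhat y + y)) :
    ({x | ℓhat (s x) ≠ ℓ x} : Finset G) ⊆ confusable P {e | e ∈ L ∧ e ≠ 0} := by
  intro x hx
  obtain ⟨hℓ, hs, hx_eq⟩ := hsplit x
  obtain ⟨hℓhat, hmax⟩ := hdecode (s x) hs
  have herror : ℓhat (s x) ≠ ℓ x := (mem_filter.mp hx).2
  have hcompetitor : x + (ℓhat (s x) - ℓ x) = ℓhat (s x) + s x := by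
    nth_rewrite 1 [hx_eq]
    abel
  refine mem_filter.mpr ⟨mem_univ x, ℓhat (s x) - ℓ x, ?_, ?_⟩
  · exact mem_filter.mpr ⟨mem_univ _, sub_mem hℓhat hℓ, sub_ne_zero.mpr herror⟩
  · simpa only [hcompetitor, ← hx_eq] using hmax (ℓ x) hℓ

theorem bhattacharyya_comp_addEquiv {H : Type*} [AddCommGroup H] [Fintype H] (φ : G ≃+ H)
    (P : H → ℝ) (e : G) : bhattacharyya (P ∘ φ) e = bhattacharyya P (φ e) :=
  Fintype.sum_equiv φ.toEquiv _ _ fun x => by simp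

theorem bhattacharyya_pi {ι : Type*} [Fintype ι] [DecidableEq ι] {A : ι → Type*}
    [∀ i, AddCommGroup (A i)] [∀ i, Fintype (A i)] {q : ∀ i, A i → ℝ} (hq : ∀ i a, 0 ≤ q i a)
    (e : ∀ i, A i) :
    bhattacharyya (fun x => ∏ i, q i (x i)) e = ∏ i, bhattacharyya (q i) (e i) := by
  simp only [bhattacharyya, Fintype.prod_sum, Pi.add_apply, ← prod_mul_distrib]
  exact sum_congr rfl fun x _ =>
    Real.sqrt_prod _ fun i _ => mul_nonneg (hq i _) (hq i _)

variable [DecidableEq G] {a b : ℝ}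

theorem bhattacharyya_ite_zero (ha : 0 ≤ a) (hb : 0 ≤ b) :
    bhattacharyya (fun x : G => if x = 0 then a else b) 0 = a + (Fintype.card G - 1 : ℕ) * b := by
  rw [← sum_ite_eq_zero, bhattacharyya]
  refine sum_congr rfl fun x _ => ?_
  rw [add_zero, Real.sqrt_mul_self (by split_ifs <;> assumption)]

theorem bhattacharyya_ite_of_ne_zero (hb : 0 ≤ b) {e : G} (he : e ≠ 0) :
    bhattacharyya (fun x : G => if x = 0 then a else b) e =
      2 * √(a * b) + (Fintype.card G - 2 : ℕ) * b := by
  have hne : -e ∈ univ.erase (0 : G) := mem_erase.mpr ⟨neg_ne_zero.mpr he, mem_univ _⟩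
  have hrest : ∀ x ∈ (univ.erase (0 : G)).erase (-e),
      √((if x = 0 then a else b) * if x + e = 0 then a else b) = b := by
    intro x hx
    have hxe : x + e ≠ 0 := fun h => ne_of_mem_erase hx (eq_neg_of_add_eq_zero_left h)
    rw [if_neg (ne_of_mem_erase (mem_of_mem_erase hx)), if_neg hxe, Real.sqrt_mul_self hb]
  rw [bhattacharyya, ← add_sum_erase _ _ (mem_univ 0), ← add_sum_erase _ _ hne,
    sum_congr rfl hrest, sum_const, nsmul_eq_mul, card_erase_of_mem hne,
    card_erase_of_mem (mem_univ 0), card_univ]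
  simp only [if_true, zero_add, if_neg he, neg_add_cancel, if_neg (neg_ne_zero.mpr he),
    mul_comm b a, Nat.sub_sub]
  ring

end Bhattacharyya

section Pauli

variable {n : ℕ}

/-- The view of an `n`-qubit Pauli operator `(x, z)` as its sequence of single-qubit Paulis
`(xᵢ, zᵢ)`, which turns the Pauli weight into the Hamming weight. -/
def pauliSites (n : ℕ) : V n ≃+ (Fin n → ZMod 2 × ZMod 2) :=
  { (Equiv.arrowProdEquivProdArrow (Fin n) (fun _ => ZMod 2) (fun _ => ZMod 2)).symm with
    map_add' := fun _ _ => rfl }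

theorem pauliSites_apply (v : V n) (i : Fin n) : pauliSites n v i = (v.1 i, v.2 i) :=
  rfl

theorem hammingNorm_pauliSites (v : V n) : hammingNorm (pauliSites n v) = wt v := by
  simp only [hammingNorm, wt, ne_eq, pauliSites_apply, Prod.mk_eq_zero]

theorem sum_pow_wt (n : ℕ) (γ : ℝ) : ∑ v : V n, γ ^ wt v = (1 + 3 * γ) ^ n := by
  calc ∑ v : V n, γ ^ wt v
      = ∑ v : V n, γ ^ hammingNorm (pauliSites n v) := by simp only [hammingNorm_pauliSites]
    _ = ∑ x : Fin n → ZMod 2 × ZMod 2, γ ^ hammingNorm x :=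
        (pauliSites n).toEquiv.sum_comp fun x => γ ^ hammingNorm x
    _ = (1 + 3 * γ) ^ n := by simp [sum_pow_hammingNorm]

theorem sum_ne_zero_pow_wt (n : ℕ) (γ : ℝ) :
    ∑ v : V n with v ≠ 0, γ ^ wt v = (1 + 3 * γ) ^ n - 1 := by
  rw [← sum_pow_wt, filter_ne', sum_erase_eq_sub (mem_univ 0)]
  simp [wt]

theorem depolP_eq_prod (p : ℝ) :
    depolP n p = (fun x => ∏ i, if x i = 0 then 1 - p else p / 3) ∘ pauliSites n := by
  ext v
  simp [depolP, prod_ite_eq_zero_eq_pow_mul_pow_hammingNorm, hammingNorm_pauliSites]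

theorem depolP_nonneg {p : ℝ} (hp₀ : 0 ≤ p) (hp₁ : p ≤ 1) (v : V n) : 0 ≤ depolP n p v :=
  mul_nonneg (pow_nonneg (sub_nonneg.mpr hp₁) _) (pow_nonneg (by positivity) _)

theorem bhattacharyya_depolP {p : ℝ} (hp₀ : 0 ≤ p) (hp₁ : p ≤ 1) (e : V n) :
    bhattacharyya (depolP n p) e = (2 * √(p * (1 - p) / 3) + 2 * p / 3) ^ wt e := by
  have hp : 0 ≤ 1 - p := sub_nonneg.mpr hp₁
  have hsite (d : ZMod 2 × ZMod 2) :
      bhattacharyya (fun x => if x = 0 then 1 - p else p / 3) d =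
        if d = 0 then 1 else 2 * √(p * (1 - p) / 3) + 2 * p / 3 := by
    have hcard : Fintype.card (ZMod 2 × ZMod 2) = 4 := rfl
    split_ifs with hd
    · rw [hd, bhattacharyya_ite_zero hp (by positivity), hcard]
      ring
    · rw [bhattacharyya_ite_of_ne_zero (by positivity) hd, hcard,
        show (1 - p) * (p / 3) = p * (1 - p) / 3 by ring]
      ring
  have hnonneg (_ : Fin n) (x : ZMod 2 × ZMod 2) : 0 ≤ if x = 0 then 1 - p else p / 3 := by
    split_ifs <;> positivity
  rw [depolP_eq_prod, bhattacharyya_comp_addEquiv, bhattacharyya_pi hnonneg]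
  simp [hsite, prod_ite_eq_zero_eq_pow_mul_pow_hammingNorm, hammingNorm_pauliSites]

end Pauli

section SymplecticForm

variable {n : ℕ}

theorem sympl_comm (u v : V n) : sympl u v = sympl v u :=
  sum_congr rfl fun _ _ => by ring

/-- The symplectic product as a bilinear form, giving access to the theory of orthogonal
complements and isometries. -/
def symplForm (n : ℕ) : LinearMap.BilinForm (ZMod 2) (V n) :=
  LinearMap.mk₂ (ZMod 2) sympl sympl_add_left sympl_smul_left
    (fun u v w => by rw [sympl_comm, sympl_add_left, sympl_comm v, sympl_comm w])
    (fun c u v => by rw [sympl_comm, sympl_smul_left, sympl_comm v, smul_eq_mul])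

theorem symplForm_apply (u v : V n) : symplForm n u v = sympl u v :=
  rfl

theorem isAlt_symplForm (n : ℕ) : (symplForm n).IsAlt := fun u => by
  rw [symplForm_apply]
  exact sum_eq_zero fun i _ => by rw [mul_comm (u.2 i), CharTwo.add_self_eq_zero]

theorem nondegenerate_symplForm (n : ℕ) : (symplForm n).Nondegenerate := by
  refine (isAlt_symplForm n).isRefl.nondegenerate_iff_separatingLeft.mpr fun u hu => ?_
  ext i
  · simpa [symplForm_apply, sympl, Pi.single_apply] using hu (0, Pi.single i 1)
  · simpa [symplForm_apply, sympl, Pi.single_apply] using hu (Pi.single i 1, 0)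

theorem sdual_eq_orthogonal (S : Submodule (ZMod 2) (V n)) :
    sdual S = (symplForm n).orthogonal S := by
  ext u
  exact forall₂_congr fun w _ => by rw [sympl_comm]; rfl

theorem finrank_V (n : ℕ) : Module.finrank (ZMod 2) (V n) = 2 * n := by
  simp [two_mul]

theorem finrank_sdual (S : Submodule (ZMod 2) (V n)) :
    Module.finrank (ZMod 2) (sdual S) = 2 * n - Module.finrank (ZMod 2) S := by
  rw [sdual_eq_orthogonal, LinearMap.BilinForm.finrank_orthogonal (nondegenerate_symplForm n),
    finrank_V]

theorem isIsometryInvariant_of_mem_iff {d : ℕ} {𝒱 : Finset (Submodule (ZMod 2) (V n))}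
    (h𝒱 : ∀ S, S ∈ 𝒱 ↔ Module.finrank (ZMod 2) S = d ∧ S ⊓ sdual S = ⊥) :
    IsIsometryInvariant (symplForm n) 𝒱 := by
  intro g S hS
  obtain ⟨hdim, hdisj⟩ := (h𝒱 S).mp hS
  refine (h𝒱 _).mpr ⟨?_, ?_⟩
  · rw [LinearEquiv.finrank_map_eq, hdim]
  · rw [sdual_eq_orthogonal, ← map_isometryEquiv_orthogonal, ← sdual_eq_orthogonal,
      ← Submodule.map_inf _ (g : V n ≃ₗ[ZMod 2] V n).injective, hdisj, Submodule.map_bot]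

end SymplecticForm

section RandomCode

variable {n : ℕ}

/-- The nontrivial logical operators of the code defined by `S`: the nonzero elements
of `S^⊥`. -/
noncomputable def logicals (S : Submodule (ZMod 2) (V n)) : Finset (V n) :=
  {e | e ∈ sdual S ∧ e ≠ 0}

theorem sum_confusable_depolP_le {p : ℝ} (hp₀ : 0 ≤ p) (hp₁ : p ≤ 1) (T : Finset (V n)) :
    ∑ E ∈ confusable (depolP n p) T, depolP n p E ≤
      ∑ e ∈ T, (2 * √(p * (1 - p) / 3) + 2 * p / 3) ^ wt e := by
  simpa only [bhattacharyya_depolP hp₀ hp₁] using sum_confusable_le (depolP_nonneg hp₀ hp₁) T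

theorem average_weightEnumerator_eq (hn : 1 ≤ n) {r : ℕ}
    {𝒱 : Finset (Submodule (ZMod 2) (V n))} (h𝒱 : IsIsometryInvariant (symplForm n) 𝒱)
    (hr : ∀ S ∈ 𝒱, Module.finrank (ZMod 2) (sdual S) = r) (hne : 𝒱.Nonempty) (γ : ℝ) :
    (1 / (#𝒱 : ℝ)) * ∑ S ∈ 𝒱, ∑ e ∈ logicals S, γ ^ wt e =
      ((2 ^ r - 1) / (2 ^ (2 * n) - 1)) * ((1 + 3 * γ) ^ n - 1) := by
  have : NeZero n := ⟨by lia⟩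
  have haverage := h𝒱.average_sum_orthogonal_eq (isAlt_symplForm n) (nondegenerate_symplForm n)
    hne (fun S hS => sdual_eq_orthogonal S ▸ hr S hS) fun e => γ ^ wt e
  rw [sum_ne_zero_pow_wt, finrank_V, ZMod.card, Nat.cast_ofNat] at haverage
  simpa only [logicals, sdual_eq_orthogonal] using haverage

theorem expected_weight_enumerator_bound_random_code_general (n : ℕ) (hn : 1 ≤ n) (r : ℕ)
    (𝒱 : Finset (Submodule (ZMod 2) (V n))) (h𝒱 : IsIsometryInvariant (symplForm n) 𝒱)
    (hr : ∀ S ∈ 𝒱, Module.finrank (ZMod 2) (sdual S) = r) (hne : 𝒱.Nonempty) :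
    (∀ γ : ℝ,
      (1 / (#𝒱 : ℝ)) * ∑ S ∈ 𝒱, ∑ e ∈ logicals S, γ ^ wt e =
        ((2 ^ r - 1) / (2 ^ (2 * n) - 1)) * ((1 + 3 * γ) ^ n - 1)) ∧
    (∀ p : ℝ, 0 ≤ p → p ≤ 1 →
      (1 / (#𝒱 : ℝ)) * ∑ S ∈ 𝒱, ∑ E ∈ confusable (depolP n p) (logicals S), depolP n p E ≤
        ((2 ^ r - 1) / (2 ^ (2 * n) - 1)) *
          ((1 + 3 * (2 * √(p * (1 - p) / 3) + 2 * p / 3)) ^ n - 1)) := by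
  have haverage := average_weightEnumerator_eq hn h𝒱 hr hne
  refine ⟨haverage, fun p hp₀ hp₁ => ?_⟩
  rw [← haverage]
  gcongr with S
  exact sum_confusable_depolP_le hp₀ hp₁ (logicals S)

end RandomCode

/-- Expected weight-enumerator bound for a random maximal-entanglement
`[[n,k;n−k]]` EAQEC code: for every `γ ≥ 0`,
`(1/|𝒱|) ∑_{S ∈ 𝒱} ∑_{0 ≠ e ∈ S^⊥} γ^{wt e} = ((2^{2k}−1)/(2^{2n}−1))((1+3γ)^n − 1)`;
in particular, for the depolarizing channel with parameter `p` and Bhattacharyya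
parameter `γ`, the average MAP block error probability is at most the right-hand
side. -/
theorem expected_weight_enumerator_bound_random_code (n k : ℕ) (hn : 1 ≤ n) (hk : k ≤ n)
    (𝒱 : Finset (Submodule (ZMod 2) (V n)))
    (h𝒱 : ∀ S : Submodule (ZMod 2) (V n),
      S ∈ 𝒱 ↔ (Module.finrank (ZMod 2) S = 2 * (n - k) ∧ S ⊓ sdual S = ⊥))
    (hne : 𝒱.Nonempty) :
    (∀ γ : ℝ, 0 ≤ γ →
      (1 / (𝒱.card : ℝ)) * ∑ S ∈ 𝒱,
          ∑ e ∈ Finset.univ.filter (fun e => e ∈ sdual S ∧ e ≠ 0), γ ^ (wt e) =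
        ((2 ^ (2 * k) - 1) / (2 ^ (2 * n) - 1)) * ((1 + 3 * γ) ^ n - 1)) ∧
    (∀ p : ℝ, 0 ≤ p → p ≤ 1 →
      ∀ ℓpart spart ℓhat : Submodule (ZMod 2) (V n) → V n → V n,
        (∀ S ∈ 𝒱,
          (∀ E : V n, ℓpart S E ∈ sdual S ∧ spart S E ∈ S ∧ E = ℓpart S E + spart S E) ∧
          (∀ s' ∈ S, ℓhat S s' ∈ sdual S ∧
            ∀ ℓ' ∈ sdual S, depolP n p (ℓ' + s') ≤ depolP n p (ℓhat S s' + s'))) →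
        (1 / (𝒱.card : ℝ)) * ∑ S ∈ 𝒱,
            ∑ E ∈ Finset.univ.filter (fun E => ℓhat S (spart S E) ≠ ℓpart S E),
              depolP n p E ≤
          ((2 ^ (2 * k) - 1) / (2 ^ (2 * n) - 1)) *
            ((1 + 3 * (2 * Real.sqrt (p * (1 - p) / 3) + 2 * p / 3)) ^ n - 1)) := by
  have hrank : ∀ S ∈ 𝒱, Module.finrank (ZMod 2) (sdual S) = 2 * k := fun S hS => by
    rw [finrank_sdual, ((h𝒱 S).mp hS).1]
    lia
  obtain ⟨henumerator, hconfusable⟩ := expected_weight_enumerator_bound_random_code_general n hn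
    (2 * k) 𝒱 (isIsometryInvariant_of_mem_iff h𝒱) hrank hne
  refine ⟨fun γ _ => henumerator γ, fun p hp₀ hp₁ ℓpart spart ℓhat hMAP =>
    le_trans ?_ (hconfusable p hp₀ hp₁)⟩
  gcongr with S hS
  · exact fun E _ _ => depolP_nonneg hp₀ hp₁ E
  · exact filter_decoder_ne_subset_confusable (hMAP S hS).1 (hMAP S hS).2
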